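/- arXiv:1509.05309 — 2 statements merged into one kernel-verified Lean document; each statement's English description precedes it below -/
import Mathlib

section
/- Let K = ℚ[x]/(p(x)) where p(x) = x⁸ − 3x⁷ + 5x⁶ − 3x⁵ + 2x⁴ + 2x³ + 2x + 1 (an irreducible polynomial over ℚ), let t be the image of x in K, and let 𝓞_K be the ring of integers of K. Then the principal ideals (t + 1) and (t² − t − 1) of 𝓞_K are prime ideals, each of absolute norm 11, and the ideal (11) = 11𝓞_K factors as (11) = (t + 1)(t² − t − 1)𝒬₃ where 𝒬₃ is a prime ideal of absolute norm 11⁶. -/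
open Polynomial

/-- The polynomial `p(x) = x⁸ − 3x⁷ + 5x⁶ − 3x⁵ + 2x⁴ + 2x³ + 2x + 1` over `ℚ`. -/
noncomputable def pK : ℚ[X] :=
  X ^ 8 - 3 * X ^ 7 + 5 * X ^ 6 - 3 * X ^ 5 + 2 * X ^ 4 + 2 * X ^ 3 + 2 * X + 1

/-!
Irreducibility of `p` follows from a Murty-type criterion: all complex roots of `p` lie in the disc
of radius `6` (Cauchy's bound), so a factorization of `p` over `ℤ` would factor the prime
`p(7) = 3837499` into integers of absolute value greater than `1`.

Modulo `11`, `p` is the product of the distinct irreducible polynomials `x + 1`, `x - 4` and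
`x⁶ - 2x⁴ + 2x³ - x - 3`. In particular `p` is separable modulo `11`, and since `p'(t)` lies in the
conductor of `ℤ[t]`, the conductor is prime to `11`. By Dedekind–Kummer, the primes above `11` are
`(11, t + 1)`, `(11, t - 4)` and `(11, g(t))` with `g` the sextic factor. The first two are
principal, generated by `t + 1` and `t² - t - 1 = (t - 4)(t + 3) + 11`, because these elements
divide `11`, and the latter also `t - 4`, already in `ℤ[t]`.
-/

theorem one_lt_norm_eval_of_forall_roots {K : Type*} [NormedField K] {f : K[X]} (hf : f.Monic)
    (hsplits : f.Splits) (hdeg : f.natDegree ≠ 0) {x : K}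
    (hroots : ∀ z ∈ f.roots, 1 < ‖x - z‖) : 1 < ‖f.eval x‖ := by
  rw [hsplits.eval_eq_prod_roots_of_monic hf]
  refine Multiset.prod_induction_nonempty (1 < ‖·‖) ?_ ?_ ?_
  · intro a b ha hb
    rw [norm_mul]
    exact one_lt_mul_of_lt_of_le ha hb.le
  · rw [Multiset.empty_eq_zero, Ne, Multiset.map_eq_zero, ← Multiset.card_eq_zero,
      ← hsplits.natDegree_eq_card_roots]
    exact hdeg
  · simpa only [Multiset.forall_mem_map_iff] using hroots

theorem irreducible_of_prime_eval {f : ℤ[X]} (hf : f.Monic) {n : ℤ} (hn : Prime (f.eval n))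
    (hroots : ∀ z : ℂ, aeval z f = 0 → 1 < ‖(n : ℂ) - z‖) : Irreducible f := by
  have natDegree_eq_zero {g : ℤ[X]} (hg : g.Monic) (hgf : g ∣ f) (hunit : IsUnit (g.eval n)) :
      g.natDegree = 0 := by
    by_contra hdeg
    have hlt := one_lt_norm_eval_of_forall_roots (hg.map (algebraMap ℤ ℂ))
      (IsAlgClosed.splits _) (by rwa [hg.natDegree_map]) (x := (n : ℂ)) fun z hz => hroots z <| by
        rw [mem_roots (hg.map _).ne_zero, IsRoot.def, eval_map_algebraMap] at hz
        exact aeval_eq_zero_of_dvd_aeval_eq_zero hgf hz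
    rw [eval_map_algebraMap, ← eq_intCast (algebraMap ℤ ℂ) n, aeval_algebraMap_apply,
      coe_aeval_eq_eval, eq_intCast, Complex.norm_intCast] at hlt
    rcases Int.isUnit_iff.mp hunit with h | h <;> norm_num [h] at hlt
  refine hf.irreducible_iff_natDegree.mpr ⟨?_, fun g h hg hh hgh => ?_⟩
  · rintro rfl
    exact hn.not_isUnit (by simp)
  · have hirr := hn.irreducible
    rw [← hgh, eval_mul] at hirr
    exact (hirr.isUnit_or_isUnit rfl).imp (natDegree_eq_zero hg ⟨h, hgh.symm⟩)
      (natDegree_eq_zero hh ⟨g, by rw [← hgh, mul_comm]⟩)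

theorem irreducible_of_prime_eval_of_cauchyBound_add_one_le {f : ℤ[X]} (hf : f.Monic) {n : ℤ}
    (hn : Prime (f.eval n)) (hbound : cauchyBound (f.map (algebraMap ℤ ℂ)) + 1 ≤ ‖n‖₊) :
    Irreducible f := by
  refine irreducible_of_prime_eval hf hn fun z hz => ?_
  have hz' : ‖z‖₊ < cauchyBound (f.map (algebraMap ℤ ℂ)) :=
    IsRoot.norm_lt_cauchyBound (hf.map _).ne_zero (by rwa [IsRoot.def, eval_map_algebraMap])
  have hlt : ‖z‖ + 1 < ‖(n : ℂ)‖ := by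
    rw [Complex.norm_intCast, ← Int.norm_eq_abs]
    exact_mod_cast (add_lt_add_left hz' 1).trans_le hbound
  linarith [norm_sub_norm_le (n : ℂ) z]

section ModularReduction

variable {S : Type*} [CommRing S] {n : ℕ}

theorem natCast_dvd_aeval_of_map_eq_zero {F : ℤ[X]} (h : F.map (Int.castRingHom (ZMod n)) = 0)
    (θ : S) : (n : S) ∣ aeval θ F := by
  have hdvd : C (n : ℤ) ∣ F := (C_dvd_iff_dvd_coeff _ _).mpr fun i => by
    rw [← ZMod.intCast_zmod_eq_zero_iff_dvd, ← eq_intCast (Int.castRingHom (ZMod n)), ← coeff_map,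
      h, coeff_zero]
  simpa using map_dvd (aeval θ) hdvd

theorem natCast_dvd_aeval_sub_of_map_eq {F G : ℤ[X]}
    (h : F.map (Int.castRingHom (ZMod n)) = G.map (Int.castRingHom (ZMod n))) (θ : S) :
    (n : S) ∣ aeval θ F - aeval θ G := by
  rw [← map_sub]
  exact natCast_dvd_aeval_of_map_eq_zero (by rw [Polynomial.map_sub, h, sub_self]) θ

theorem isCoprime_span_natCast_aeval {F G : ℤ[X]}
    (h : IsCoprime (F.map (Int.castRingHom (ZMod n))) (G.map (Int.castRingHom (ZMod n)))) (θ : S) :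
    IsCoprime (Ideal.span {(n : S), aeval θ F}) (Ideal.span {(n : S), aeval θ G}) := by
  have hsurj := map_surjective _ (ZMod.ringHom_surjective (Int.castRingHom (ZMod n)))
  obtain ⟨u, v, huv⟩ := h
  obtain ⟨U, rfl⟩ := hsurj u
  obtain ⟨V, rfl⟩ := hsurj v
  obtain ⟨s, hs⟩ := natCast_dvd_aeval_sub_of_map_eq (F := U * F + V * G) (G := 1) (n := n)
    (by simpa using huv) θ
  simp only [map_add, map_mul, map_one] at hs
  exact Ideal.isCoprime_iff_exists.mpr
    ⟨aeval θ U * aeval θ F - s * n, Ideal.mem_span_pair.mpr ⟨-s, aeval θ U, by ring⟩,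
      aeval θ V * aeval θ G, Ideal.mem_span_pair.mpr ⟨0, aeval θ V, by ring⟩,
      by linear_combination hs⟩

theorem prod_span_pair_le {ι : Type*} (s : Finset ι) (a : S) (b : ι → S) :
    ∏ i ∈ s, Ideal.span {a, b i} ≤ Ideal.span {a, ∏ i ∈ s, b i} := by
  induction s using Finset.cons_induction with
  | empty =>
    rw [Finset.prod_empty, Ideal.one_eq_top, Finset.prod_empty]
    exact (Ideal.eq_top_of_isUnit_mem _ (Ideal.subset_span (by simp)) isUnit_one).ge
  | cons i s hi ih =>
    rw [Finset.prod_cons, Finset.prod_cons]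
    calc Ideal.span {a, b i} * ∏ i ∈ s, Ideal.span {a, b i}
      _ ≤ Ideal.span {a, b i} * Ideal.span {a, ∏ i ∈ s, b i} := Ideal.mul_mono_right ih
      _ ≤ Ideal.span {a, b i * ∏ i ∈ s, b i} := by
        rw [Ideal.span_pair_mul_span_pair, Ideal.span_le]
        rintro _ (rfl | rfl | rfl | rfl) <;> refine Ideal.mem_span_pair.mpr ?_
        · exact ⟨a, 0, by ring⟩
        · exact ⟨∏ i ∈ s, b i, 0, by ring⟩
        · exact ⟨b i, 0, by ring⟩
        · exact ⟨0, 1, by ring⟩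

theorem span_natCast_eq_prod_span_pair {ι : Type*} [Fintype ι] {f : ℤ[X]} {Q : ι → ℤ[X]} {θ : S}
    (hθ : aeval θ f = 0)
    (hf : f.map (Int.castRingHom (ZMod n)) = ∏ i, (Q i).map (Int.castRingHom (ZMod n)))
    (hQ : Pairwise fun i j =>
      IsCoprime ((Q i).map (Int.castRingHom (ZMod n))) ((Q j).map (Int.castRingHom (ZMod n)))) :
    Ideal.span {(n : S)} = ∏ i, Ideal.span {(n : S), aeval θ (Q i)} := by
  apply le_antisymm
  · rw [Ideal.prod_eq_iInf_of_pairwise_isCoprime fun i _ j _ hij =>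
      isCoprime_span_natCast_aeval (hQ hij) θ]
    exact le_iInf₂ fun i _ => Ideal.span_mono (by simp)
  · refine (prod_span_pair_le _ _ _).trans ?_
    obtain ⟨c, hc⟩ := natCast_dvd_aeval_sub_of_map_eq (F := ∏ i, Q i) (G := f) (n := n)
      (by rw [hf, Polynomial.map_prod]) θ
    rw [hθ, sub_zero, map_prod] at hc
    rw [Ideal.span_le, Set.pair_subset_iff, hc]
    exact ⟨Ideal.mem_span_singleton_self _, Ideal.mem_span_singleton.mpr (dvd_mul_right _ _)⟩

end ModularReduction

section DedekindKummer

open NumberField RingOfIntegers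

variable {K : Type*} [Field K] {θ : 𝓞 K} {p : ℕ} [Fact p.Prime]

theorem mem_monicFactorsMod_iff {q : (ZMod p)[X]} :
    q ∈ monicFactorsMod θ p ↔
      Irreducible q ∧ q.Monic ∧ q ∣ (minpoly ℤ θ).map (Int.castRingHom (ZMod p)) := by
  rw [monicFactorsMod, Multiset.mem_toFinset,
    Polynomial.mem_normalizedFactors_iff (map_monic_ne_zero (minpoly.monic θ.isIntegral))]

variable [NumberField K]

theorem aeval_derivative_minpoly_mem_conductor
    (hθ : Algebra.adjoin ℚ {algebraMap (𝓞 K) K θ} = ⊤) :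
    aeval θ (derivative (minpoly ℤ θ)) ∈ conductor ℤ θ := by
  have hmem := Ideal.mem_span_singleton_self (aeval θ (derivative (minpoly ℤ θ)))
  rw [← conductor_mul_differentIdeal ℤ ℚ K θ hθ] at hmem
  exact Ideal.mul_le_left hmem

theorem not_dvd_exponent_of_separable_map_minpoly
    (hθ : Algebra.adjoin ℚ {algebraMap (𝓞 K) K θ} = ⊤)
    (hsep : ((minpoly ℤ θ).map (Int.castRingHom (ZMod p))).Separable) : ¬ p ∣ exponent θ := by
  rw [not_dvd_exponent_iff]
  by_contra hcodisjoint
  have hmax : (Ideal.span {(p : ℤ)}).IsMaximal := Int.ideal_span_isMaximal_of_prime p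
  have hle : (conductor ℤ θ).comap (algebraMap ℤ (𝓞 K)) ≤ Ideal.span {(p : ℤ)} := by
    by_contra hle
    exact hcodisjoint (hmax.out.not_le_iff_codisjoint.mp hle).symm
  obtain ⟨P, hconductor, hP, hcomap⟩ := Ideal.exists_ideal_over_prime_of_isIntegral _ _ hle
  have hpP : (p : 𝓞 K) ∈ P := by
    have : (p : ℤ) ∈ P.comap (algebraMap ℤ (𝓞 K)) := hcomap ▸ Ideal.mem_span_singleton_self _
    simpa using this
  have hcoprime := isCoprime_span_natCast_aeval (n := p)
    (F := minpoly ℤ θ) (G := derivative (minpoly ℤ θ)) (by rwa [← derivative_map]) θ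
  refine hP.ne_top (top_le_iff.mp ?_)
  rw [← Ideal.isCoprime_iff_sup_eq.mp hcoprime]
  refine sup_le ?_ ?_ <;> rw [Ideal.span_le, Set.pair_subset_iff]
  · exact ⟨hpP, by simp⟩
  · exact ⟨hpP, hconductor (aeval_derivative_minpoly_mem_conductor hθ)⟩

theorem isPrime_span_pair_of_mem_monicFactorsMod (hp : ¬ p ∣ exponent θ) {Q : ℤ[X]}
    (hQ : Q.map (Int.castRingHom (ZMod p)) ∈ monicFactorsMod θ p) :
    (Ideal.span {(p : 𝓞 K), aeval θ Q}).IsPrime := by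
  rw [← Ideal.primesOverSpanEquivMonicFactorsMod_symm_apply_eq_span hp hQ]
  exact ((Ideal.primesOverSpanEquivMonicFactorsMod hp).symm ⟨_, hQ⟩).prop.1

theorem absNorm_span_pair_of_mem_monicFactorsMod (hp : ¬ p ∣ exponent θ) {Q : ℤ[X]}
    (hQ : Q.map (Int.castRingHom (ZMod p)) ∈ monicFactorsMod θ p) :
    Ideal.absNorm (Ideal.span {(p : 𝓞 K), aeval θ Q}) =
      p ^ (Q.map (Int.castRingHom (ZMod p))).natDegree := by
  have := (mem_monicFactorsMod_iff.mp hQ).2.1.finite_quotient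
  calc Nat.card (𝓞 K ⧸ Ideal.span {(p : 𝓞 K), aeval θ Q})
    _ = Nat.card ((ZMod p)[X] ⧸ Ideal.span {Q.map (Int.castRingHom (ZMod p))}) :=
      Nat.card_congr (ZModXQuotSpanEquivQuotSpanPair hp hQ).symm.toEquiv
    _ = p ^ (Q.map (Int.castRingHom (ZMod p))).natDegree := by
      rw [Module.natCard_eq_pow_finrank (K := ZMod p), finrank_quotient_span_eq_natDegree,
        Nat.card_zmod]

end DedekindKummer

theorem minpoly_eq_of_irreducible_of_monic {A B : Type*} [CommRing A] [IsDomain A]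
    [IsIntegrallyClosed A] [CommRing B] [IsDomain B] [Algebra A B] [Module.IsTorsionFree A B]
    {f : A[X]} (hirr : Irreducible f) (hmonic : f.Monic) {x : B} (hx : aeval x f = 0) :
    minpoly A x = f :=
  have hint : IsIntegral A x := ⟨f, hmonic, hx⟩
  eq_of_monic_of_associated (minpoly.monic hint) hmonic <|
    (minpoly.irreducible hint).associated_of_dvd hirr (minpoly.isIntegrallyClosed_dvd hint hx)

theorem pairwise_isCoprime_of_irreducible_of_monic {k ι : Type*} [Field k] {q : ι → k[X]}
    (hirr : ∀ i, Irreducible (q i)) (hmonic : ∀ i, (q i).Monic) (hinj : Function.Injective q) :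
    Pairwise fun i j => IsCoprime (q i) (q j) := fun i j hij =>
  (hirr i).coprime_iff_not_dvd.mpr fun hdvd => hij <| hinj <|
    eq_of_monic_of_associated (hmonic i) (hmonic j) ((hirr i).associated_of_dvd (hirr j) hdvd)

/-- The polynomial `pK` over `ℤ`. -/
noncomputable def pInt : ℤ[X] :=
  X ^ 8 - 3 * X ^ 7 + 5 * X ^ 6 - 3 * X ^ 5 + 2 * X ^ 4 + 2 * X ^ 3 + 2 * X + 1

theorem monic_pInt : pInt.Monic := by unfold pInt; monicity!

theorem natDegree_pInt : pInt.natDegree = 8 := by unfold pInt; compute_degree!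

theorem cauchyBound_pInt_le : cauchyBound (pInt.map (algebraMap ℤ ℂ)) ≤ 6 := by
  rw [cauchyBound, monic_pInt.natDegree_map, (monic_pInt.map _).leadingCoeff, natDegree_pInt,
    nnnorm_one, div_one, show (6 : NNReal) = 5 + 1 by norm_num]
  gcongr
  refine Finset.sup_le fun i hi => ?_
  have hi := Finset.mem_range.mp hi
  rw [coeff_map, eq_intCast, ← NNReal.coe_le_coe, coe_nnnorm, Complex.norm_intCast]
  interval_cases i <;> norm_num [pInt, coeff_X, coeff_one, coeff_ofNat_mul]

theorem irreducible_pInt : Irreducible pInt := by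
  refine irreducible_of_prime_eval_of_cauchyBound_add_one_le monic_pInt (n := 7) ?_ ?_
  · have : pInt.eval 7 = 3837499 := by simp [pInt]
    rw [this]
    norm_num [Int.prime_iff_natAbs_prime]
  · calc _ ≤ (6 : NNReal) + 1 := by gcongr; exact cauchyBound_pInt_le
      _ = ‖(7 : ℤ)‖₊ := by
        rw [← NNReal.coe_inj, coe_nnnorm, Int.norm_eq_abs]
        norm_num

theorem map_pInt : pInt.map (algebraMap ℤ ℚ) = pK := by
  simp [pInt, pK, Polynomial.map_ofNat]

theorem irreducible_pK : Irreducible pK := by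
  rw [← map_pInt]
  exact monic_pInt.irreducible_iff_irreducible_map_fraction_map.mp irreducible_pInt

instance fact_prime_eleven : Fact (Nat.Prime 11) := ⟨by norm_num⟩

/-- An integer lift of the irreducible factor of degree six of `pInt` modulo `11`. -/
noncomputable def sexticFactor : ℤ[X] := X ^ 6 - 2 * X ^ 4 + 2 * X ^ 3 - X - 3

theorem monic_sexticFactor : sexticFactor.Monic := by unfold sexticFactor; monicity!

theorem natDegree_sexticFactor : sexticFactor.natDegree = 6 := by
  unfold sexticFactor; compute_degree!

theorem map_sexticFactor {R : Type*} [CommRing R] (φ : ℤ →+* R) :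
    sexticFactor.map φ = X ^ 6 - 2 * X ^ 4 + 2 * X ^ 3 - X - 3 := by
  simp [sexticFactor, Polynomial.map_ofNat]

theorem coeff_eq_of_eq_map_sexticFactor {R : Type*} [CommRing R] {s₀ s₁ s₂ s₃ s₄ s₅ : R}
    (h : X ^ 6 + C s₅ * X ^ 5 + C s₄ * X ^ 4 + C s₃ * X ^ 3 + C s₂ * X ^ 2 + C s₁ * X ^ 1 +
      C s₀ * X ^ 0 = sexticFactor.map (Int.castRingHom R)) :
    s₅ = 0 ∧ s₄ = -2 ∧ s₃ = 2 ∧ s₂ = 0 ∧ s₁ = -1 ∧ s₀ = -3 := by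
  have hsextic : sexticFactor.map (Int.castRingHom R) =
      X ^ 6 + C (-2) * X ^ 4 + C 2 * X ^ 3 + C (-1) * X ^ 1 + C (-3) * X ^ 0 := by
    simp only [map_sexticFactor, map_neg, map_one, map_ofNat]
    ring
  have hcoeff (i : ℕ) := congrArg (coeff · i) (h.trans hsextic)
  simp only [coeff_add, coeff_C_mul_X_pow, coeff_X_pow] at hcoeff
  exact ⟨by simpa using hcoeff 5, by simpa using hcoeff 4, by simpa using hcoeff 3,
    by simpa using hcoeff 2, by simpa using hcoeff 1, by simpa using hcoeff 0⟩

theorem not_isRoot_map_sexticFactor (r : ZMod 11) :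
    ¬ (sexticFactor.map (Int.castRingHom (ZMod 11))).IsRoot r := by
  simp only [IsRoot.def, map_sexticFactor, eval_sub, eval_add, eval_mul, eval_pow, eval_X,
    eval_ofNat]
  decide +revert

theorem quadratic_mul_quartic_ne_map_sexticFactor {g h : (ZMod 11)[X]} (hg : g.Monic) (hh : h.Monic)
    (hgdeg : g.natDegree = 2) (hhdeg : h.natDegree = 4) :
    g * h ≠ sexticFactor.map (Int.castRingHom (ZMod 11)) := by
  intro hgh
  rw [hg.as_sum, hh.as_sum, hgdeg, hhdeg] at hgh
  simp only [Finset.sum_range_succ, Finset.sum_range_zero] at hgh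
  generalize g.coeff 1 = a, g.coeff 0 = b, h.coeff 3 = c, h.coeff 2 = d, h.coeff 1 = e,
    h.coeff 0 = f at hgh
  obtain ⟨h₅, h₄, h₃, h₂, h₁, h₀⟩ := coeff_eq_of_eq_map_sexticFactor (s₅ := a + c)
    (s₄ := b + a * c + d) (s₃ := b * c + a * d + e) (s₂ := b * d + a * e + f)
    (s₁ := b * e + a * f) (s₀ := b * f) <| by
      simp only [map_add, map_mul]
      linear_combination hgh
  -- The top coefficients determine the cofactor, so it remains to check the `11²` pairs `(a, b)`.
  obtain rfl : c = -a := by linear_combination h₅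
  obtain rfl : d = -2 - b + a * a := by linear_combination h₄
  obtain rfl : e = 2 + b * a - a * (-2 - b + a * a) := by linear_combination h₃
  obtain rfl : f = -b * (-2 - b + a * a) - a * (2 + b * a - a * (-2 - b + a * a)) := by
    linear_combination h₂
  clear h₅ h₄ h₃ h₂ hgh
  revert a b
  decide +kernel

theorem cubic_mul_cubic_ne_map_sexticFactor {g h : (ZMod 11)[X]} (hg : g.Monic) (hh : h.Monic)
    (hgdeg : g.natDegree = 3) (hhdeg : h.natDegree = 3) :
    g * h ≠ sexticFactor.map (Int.castRingHom (ZMod 11)) := by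
  intro hgh
  rw [hg.as_sum, hh.as_sum, hgdeg, hhdeg] at hgh
  simp only [Finset.sum_range_succ, Finset.sum_range_zero] at hgh
  generalize g.coeff 2 = a, g.coeff 1 = b, g.coeff 0 = c, h.coeff 2 = d, h.coeff 1 = e,
    h.coeff 0 = f at hgh
  obtain ⟨h₅, h₄, h₃, h₂, h₁, h₀⟩ := coeff_eq_of_eq_map_sexticFactor (s₅ := a + d)
    (s₄ := b + a * d + e) (s₃ := c + b * d + a * e + f) (s₂ := c * d + b * e + a * f)
    (s₁ := c * e + b * f) (s₀ := c * f) <| by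
      simp only [map_add, map_mul]
      linear_combination hgh
  obtain rfl : d = -a := by linear_combination h₅
  obtain rfl : e = -2 - b + a * a := by linear_combination h₄
  obtain rfl : f = 2 - c + b * a - a * (-2 - b + a * a) := by linear_combination h₃
  clear h₅ h₄ h₃ hgh
  revert a b c
  decide +kernel

theorem irreducible_map_sexticFactor :
    Irreducible (sexticFactor.map (Int.castRingHom (ZMod 11))) := by
  have hmonic := monic_sexticFactor.map (Int.castRingHom (ZMod 11))
  have hdeg : (sexticFactor.map (Int.castRingHom (ZMod 11))).natDegree = 6 := by
    rw [monic_sexticFactor.natDegree_map, natDegree_sexticFactor]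
  refine (hmonic.irreducible_iff_natDegree').mpr ⟨fun h => ?_, fun h g hh hg hhg hgdeg => ?_⟩
  · rw [h, natDegree_one] at hdeg
    norm_num at hdeg
  · have hsum : h.natDegree + g.natDegree = 6 := by rw [← hh.natDegree_mul hg, hhg, hdeg]
    rw [hdeg, Finset.mem_Ioc] at hgdeg
    obtain h1 | h2 | h3 : g.natDegree = 1 ∨ g.natDegree = 2 ∨ g.natDegree = 3 := by omega
    · obtain ⟨r, hr⟩ := exists_root_of_degree_eq_one
        ((degree_eq_iff_natDegree_eq hg.ne_zero).mpr h1)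
      exact not_isRoot_map_sexticFactor r (hr.dvd (Dvd.intro_left h hhg))
    · exact quadratic_mul_quartic_ne_map_sexticFactor hg hh h2 (by omega) (by rw [mul_comm, hhg])
    · exact cubic_mul_cubic_ne_map_sexticFactor hg hh h3 (by omega) (by rw [mul_comm, hhg])

/-- Integer lifts of the monic irreducible factors of `pInt` modulo `11`. -/
noncomputable def factorLift : Fin 3 → ℤ[X] := ![X - C (-1), X - C 4, sexticFactor]

theorem monic_factorLift (i : Fin 3) : (factorLift i).Monic := by
  fin_cases i
  exacts [monic_X_sub_C _, monic_X_sub_C _, monic_sexticFactor]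

theorem irreducible_map_factorLift (i : Fin 3) :
    Irreducible ((factorLift i).map (Int.castRingHom (ZMod 11))) := by
  have hlinear (a : ℤ) : Irreducible ((X - C a).map (Int.castRingHom (ZMod 11))) := by
    rw [Polynomial.map_sub, map_X, map_C]
    exact irreducible_X_sub_C _
  fin_cases i
  exacts [hlinear (-1), hlinear 4, irreducible_map_sexticFactor]

theorem natDegree_map_factorLift (i : Fin 3) :
    ((factorLift i).map (Int.castRingHom (ZMod 11))).natDegree = ![1, 1, 6] i := by
  rw [(monic_factorLift i).natDegree_map]
  fin_cases i
  exacts [natDegree_X_sub_C _, natDegree_X_sub_C _, natDegree_sexticFactor]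

theorem map_factorLift_injective :
    Function.Injective fun i => (factorLift i).map (Int.castRingHom (ZMod 11)) := by
  have hcoeff : (fun i => ((factorLift i).map (Int.castRingHom (ZMod 11))).coeff 0) =
      ![1, -4, -3] := by
    funext i
    fin_cases i <;> simp [factorLift, sexticFactor]
  refine Function.Injective.of_comp (f := (coeff · 0)) ?_
  rw [Function.comp_def, hcoeff]
  decide

theorem map_pInt_eq_prod_map_factorLift :
    pInt.map (Int.castRingHom (ZMod 11)) =
      ∏ i, (factorLift i).map (Int.castRingHom (ZMod 11)) := by
  have heq : pInt = ∏ i, factorLift i + C 11 * (X ^ 6 - X ^ 5 + X ^ 3 - X - 1) := by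
    simp only [pInt, factorLift, sexticFactor,
      Fin.prod_univ_three, Matrix.cons_val, map_neg, map_one, map_ofNat]
    ring
  have h11 : Int.castRingHom (ZMod 11) 11 = 0 := by decide
  rw [heq, Polynomial.map_add, Polynomial.map_mul, map_C, h11, C_0, zero_mul, add_zero,
    Polynomial.map_prod]

theorem pairwise_isCoprime_map_factorLift : Pairwise fun i j =>
    IsCoprime ((factorLift i).map (Int.castRingHom (ZMod 11)))
      ((factorLift j).map (Int.castRingHom (ZMod 11))) :=
  pairwise_isCoprime_of_irreducible_of_monic irreducible_map_factorLift
    (fun i => (monic_factorLift i).map _) map_factorLift_injective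

theorem separable_map_pInt : (pInt.map (Int.castRingHom (ZMod 11))).Separable := by
  rw [map_pInt_eq_prod_map_factorLift]
  exact separable_prod pairwise_isCoprime_map_factorLift fun i =>
    PerfectField.separable_of_irreducible (irreducible_map_factorLift i)

section Root

variable {R : Type*} [CommRing R] {t : R}

-- The cofactors below come from inverting `t + 1` and `t² - t - 1` in `ℚ[x]/(p)`.
theorem add_one_dvd_eleven (ht : aeval t pInt = 0) : t + 1 ∣ 11 := by
  simp only [pInt, map_add, map_sub, map_mul, map_pow, map_one, map_ofNat, aeval_X] at ht
  exact ⟨10 - 12 * t + 12 * t ^ 2 - 14 * t ^ 3 + 12 * t ^ 4 - 9 * t ^ 5 + 4 * t ^ 6 - t ^ 7,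
    by linear_combination ht⟩

theorem sq_sub_sub_one_dvd_eleven (ht : aeval t pInt = 0) : t ^ 2 - t - 1 ∣ 11 := by
  simp only [pInt, map_add, map_sub, map_mul, map_pow, map_one, map_ofNat, aeval_X] at ht
  exact ⟨20 + 23 * t - 41 * t ^ 2 + 126 * t ^ 3 - 143 * t ^ 4 + 138 * t ^ 5 - 69 * t ^ 6 +
    19 * t ^ 7, by linear_combination (31 - 19 * t) * ht⟩

theorem sq_sub_sub_one_dvd_sub_four (ht : aeval t pInt = 0) : t ^ 2 - t - 1 ∣ t - 4 := by
  simp only [pInt, map_add, map_sub, map_mul, map_pow, map_one, map_ofNat, aeval_X] at ht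
  exact ⟨-9 - 10 * t + 17 * t ^ 2 - 53 * t ^ 3 + 60 * t ^ 4 - 58 * t ^ 5 + 29 * t ^ 6 -
    8 * t ^ 7, by linear_combination (8 * t - 13) * ht⟩

theorem span_eleven_aeval_factorLift_zero (ht : aeval t pInt = 0) :
    Ideal.span {((11 : ℕ) : R), aeval t (factorLift 0)} = Ideal.span {t + 1} := by
  have haeval : aeval t (factorLift 0) = t + 1 := by simp [factorLift]
  rw [haeval, Nat.cast_ofNat, Ideal.span_pair_eq_span_right_iff_dvd]
  exact add_one_dvd_eleven ht

theorem span_eleven_aeval_factorLift_one (ht : aeval t pInt = 0) :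
    Ideal.span {((11 : ℕ) : R), aeval t (factorLift 1)} = Ideal.span {t ^ 2 - t - 1} := by
  have haeval : aeval t (factorLift 1) = t - 4 := by simp [factorLift, map_ofNat]
  rw [haeval, Nat.cast_ofNat]
  apply le_antisymm
  · rw [Ideal.span_le, Set.pair_subset_iff]
    exact ⟨Ideal.mem_span_singleton.mpr (sq_sub_sub_one_dvd_eleven ht),
      Ideal.mem_span_singleton.mpr (sq_sub_sub_one_dvd_sub_four ht)⟩
  · rw [Ideal.span_singleton_le_iff_mem, Ideal.mem_span_pair]
    exact ⟨1, t + 3, by ring⟩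

end Root

open NumberField in
theorem aeval_pInt_eq_zero_of_aeval_pK {K : Type*} [Field K] [CharZero K] {t : 𝓞 K}
    (ht : aeval (algebraMap (𝓞 K) K t) pK = 0) : aeval t pInt = 0 := by
  rw [← map_pInt, aeval_map_algebraMap, aeval_algebraMap_apply] at ht
  exact RingOfIntegers.coe_eq_zero_iff.mp ht

/-- `p(x)` is irreducible over `ℚ`; and if `K = ℚ[x]/(p(x))` (i.e. any
number field generated over `ℚ` by a root `t` of `p`, with `t` in the ring of
integers `𝓞_K`), then the principal ideals `(t + 1)` and `(t² − t − 1)` of `𝓞_K` are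
prime of absolute norm `11`, and `(11) = (t + 1)(t² − t − 1)𝒬₃` with `𝒬₃` prime of
absolute norm `11⁶`. -/
theorem stmt_13 :
    Irreducible pK ∧
    ∀ (K : Type) [Field K] [NumberField K] (t : NumberField.RingOfIntegers K),
      aeval (algebraMap (NumberField.RingOfIntegers K) K t) pK = 0 →
      Algebra.adjoin ℚ {algebraMap (NumberField.RingOfIntegers K) K t} = ⊤ →
      ((Ideal.span {t + 1}).IsPrime ∧
        (Ideal.span {t ^ 2 - t - 1}).IsPrime ∧
        Ideal.absNorm (Ideal.span {t + 1}) = 11 ∧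
        Ideal.absNorm (Ideal.span {t ^ 2 - t - 1}) = 11 ∧
        ∃ Q₃ : Ideal (NumberField.RingOfIntegers K),
          Q₃.IsPrime ∧ Ideal.absNorm Q₃ = 11 ^ 6 ∧
          Ideal.span {(11 : NumberField.RingOfIntegers K)} =
            Ideal.span {t + 1} * Ideal.span {t ^ 2 - t - 1} * Q₃) := by
  refine ⟨irreducible_pK, fun K _ _ t ht hgen => ?_⟩
  have hroot := aeval_pInt_eq_zero_of_aeval_pK ht
  have hminpoly := minpoly_eq_of_irreducible_of_monic irreducible_pInt monic_pInt hroot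
  have hexponent := not_dvd_exponent_of_separable_map_minpoly hgen (hminpoly ▸ separable_map_pInt)
  have hmem (i : Fin 3) := mem_monicFactorsMod_iff (θ := t).mpr
    ⟨irreducible_map_factorLift i, (monic_factorLift i).map _, hminpoly ▸
      map_pInt_eq_prod_map_factorLift ▸ Finset.dvd_prod_of_mem _ (Finset.mem_univ i)⟩
  have hprime (i : Fin 3) := isPrime_span_pair_of_mem_monicFactorsMod hexponent (hmem i)
  have hnorm (i : Fin 3) := (absNorm_span_pair_of_mem_monicFactorsMod hexponent (hmem i)).trans
    (congrArg (11 ^ ·) (natDegree_map_factorLift i))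
  have hprod := span_natCast_eq_prod_span_pair hroot map_pInt_eq_prod_map_factorLift
    pairwise_isCoprime_map_factorLift
  have h₀ := span_eleven_aeval_factorLift_zero hroot
  have h₁ := span_eleven_aeval_factorLift_one hroot
  rw [Fin.prod_univ_three, h₀, h₁] at hprod
  exact ⟨h₀ ▸ hprime 0, h₁ ▸ hprime 1, h₀ ▸ hnorm 0, h₁ ▸ hnorm 1, _, hprime 2, hnorm 2, hprod⟩
end

section
/- Let ω be a primitive cube root of unity (so ω² + ω + 1 = 0) and ℤ[ω] the ring of Eisenstein integers. In PSL(2,ℤ[ω]), the elements represented by γ₀ = [[0,1],[−1,ω]] and γ₀' = [[0,−1],[1,ω]] are representatives of exactly two distinct conjugacy classes, and every element of PSL(2,ℤ[ω]) that is represented by a matrix in SL(2,ℤ[ω]) of trace ω or −ω is conjugate in PSL(2,ℤ[ω]) to the class of γ₀ or to the class of γ₀'. -/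
open Polynomial

/-- The ring `ℤ[ω]` of Eisenstein integers, realized as `ℤ[x]/(x² + x + 1)`. -/
abbrev Eisenstein : Type := AdjoinRoot (X ^ 2 + X + 1 : ℤ[X])

/-- A primitive cube root of unity `ω` (satisfying `ω² + ω + 1 = 0`) in `ℤ[ω]`. -/
noncomputable def ω : Eisenstein := AdjoinRoot.root _

/-- `SL(2, ℤ[ω])`: 2×2 matrices of determinant 1 over the Eisenstein integers. -/
abbrev SL2E := Matrix.SpecialLinearGroup (Fin 2) Eisenstein

/-- `PSL(2, ℤ[ω])`: the quotient of `SL(2, ℤ[ω])` by its center `{±I}`. -/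
abbrev PSL2E := SL2E ⧸ Subgroup.center SL2E

/-- `γ₀ = [[0,1],[−1,ω]]` as an element of `SL(2, ℤ[ω])`. -/
noncomputable def γ₀ : SL2E :=
  ⟨!![0, 1; -1, ω], by simp [Matrix.det_fin_two_of]⟩

/-- `γ₀' = [[0,−1],[1,ω]]` as an element of `SL(2, ℤ[ω])`. -/
noncomputable def γ₀' : SL2E :=
  ⟨!![0, -1; 1, ω], by simp [Matrix.det_fin_two_of]⟩

/-!
Conjugating `M ∈ SL(2, R)` by a matrix with bottom row `(c, d)` replaces its lower-left entry by
the value at `(c, d)` of a binary quadratic form of discriminant `(tr M)² - 4`. Over `ℤ[ω]`,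
Euclidean division completes the square in this form and so shrinks the lower-left entry until its
size is controlled by the discriminant. For trace `ω` it is then zero or a unit, and it cannot be
zero because `X² - ωX + 1` has no root after reduction by `ω ↦ 4 ∈ 𝔽₇`. Every unit is plus or minus
a square, and a square can be absorbed by a further conjugation, which leaves the normal forms `γ₀`
and `γ₀'`. A conjugation of `γ₀` to `γ₀'` would make the form `-(x² + ωxy + y²)` represent `1`. But
`ω ↦ 2 ∈ 𝔽₇` turns it into `-(x + y)²`, and `-1` is not a square modulo `7`. The trace tells `γ₀`
apart from the conjugates of `-γ₀'`.
-/

open scoped MatrixGroups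

section SpecialLinear

variable {R : Type*} [CommRing R]

lemma trace_eq_of_isConj {n : Type*} [Fintype n] [DecidableEq n]
    {M N : Matrix.SpecialLinearGroup n R} (h : IsConj M N) : M.val.trace = N.val.trace := by
  obtain ⟨g, rfl⟩ := isConj_iff.1 h
  rw [Matrix.SpecialLinearGroup.coe_mul, Matrix.trace_mul_comm,
    ← Matrix.SpecialLinearGroup.coe_mul, inv_mul_cancel_left]

lemma det_entries (M : SL(2, R)) : M 0 0 * M 1 1 - M 0 1 * M 1 0 = 1 := by
  rw [← Matrix.det_fin_two, M.det_coe]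

lemma conj_apply_one_zero (g M : SL(2, R)) :
    (g * M * g⁻¹) 1 0 =
      M 1 0 * g 1 1 ^ 2 + (M 0 0 - M 1 1) * (g 1 0 * g 1 1) - M 0 1 * g 1 0 ^ 2 := by
  simp only [Matrix.SpecialLinearGroup.coe_mul, Matrix.SpecialLinearGroup.coe_inv,
    Matrix.adjugate_fin_two, Matrix.mul_apply, Fin.sum_univ_two, Matrix.of_apply, Matrix.cons_val',
    Matrix.cons_val_zero, Matrix.cons_val_fin_one, Matrix.cons_val_one]
  ring

lemma sq_sub_trace_mul_add_one_eq_zero {M : SL(2, R)} (h : M 1 0 = 0) :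
    M 0 0 ^ 2 - M.val.trace * M 0 0 + 1 = 0 := by
  rw [Matrix.trace_fin_two]
  linear_combination -det_entries M - M 0 1 * h

/-- The companion matrix of `X² - t X + 1`, rescaled to have lower-left entry the unit `e`. For
varying `e` these are the normal forms of the matrices of trace `t` whose lower-left entry is a
unit. -/
def twistedCompanion (e : Rˣ) (t : R) : SL(2, R) :=
  ⟨!![0, -(↑e⁻¹ : R); (e : R), t], by simp [Matrix.det_fin_two_of]⟩

lemma coe_twistedCompanion (e : Rˣ) (t : R) :
    (twistedCompanion e t : Matrix (Fin 2) (Fin 2) R) = !![0, -(↑e⁻¹ : R); (e : R), t] := rfl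

lemma trace_twistedCompanion (e : Rˣ) (t : R) : (twistedCompanion e t).val.trace = t := by
  rw [coe_twistedCompanion, Matrix.trace_fin_two_of, zero_add]

lemma isConj_twistedCompanion {M : SL(2, R)} {e : Rˣ} {u : R} (h : M 1 0 * u ^ 2 = e) :
    IsConj M (twistedCompanion e M.val.trace) := by
  -- The columns of `g` are `v` and `e⁻¹ • M v`, where `v = (u, 0)`.
  let g : SL(2, R) := ⟨!![u, ↑e⁻¹ * (M 0 0 * u); 0, ↑e⁻¹ * (M 1 0 * u)], by
    rw [Matrix.det_fin_two_of]; linear_combination (↑e⁻¹ : R) * h + e.inv_mul⟩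
  have hg : (g : Matrix (Fin 2) (Fin 2) R) =
      !![u, ↑e⁻¹ * (M 0 0 * u); 0, ↑e⁻¹ * (M 1 0 * u)] := rfl
  refine (isConj_iff.2 ⟨g, mul_inv_eq_iff_eq_mul.2 ?_⟩).symm
  ext i j
  fin_cases i <;> fin_cases j <;>
    simp only [Fin.zero_eta, Fin.mk_one, Matrix.SpecialLinearGroup.coe_mul, hg,
      coe_twistedCompanion, Matrix.trace_fin_two, Matrix.mul_apply, Fin.sum_univ_two,
      Matrix.of_apply, Matrix.cons_val', Matrix.cons_val_fin_one, Matrix.cons_val_zero,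
      Matrix.cons_val_one]
  · linear_combination M 0 0 * u * e.inv_mul
  · linear_combination ↑e⁻¹ * u * det_entries M
  · linear_combination M 1 0 * u * e.inv_mul
  · ring

lemma exists_form_eq_of_isConj_twistedCompanion {e f : Rˣ} {t : R}
    (h : IsConj (twistedCompanion e t) (twistedCompanion f t)) :
    ∃ x y : R, (f : R) = e * x ^ 2 - t * (x * y) + ↑e⁻¹ * y ^ 2 := by
  obtain ⟨g, hg⟩ := isConj_iff.1 h
  refine ⟨g 1 1, g 1 0, ?_⟩
  simpa [hg, coe_twistedCompanion, mul_comm (g 1 1), ← sub_eq_add_neg] using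
    conj_apply_one_zero g (twistedCompanion e t)

lemma four_mul_conj_twistedCompanion (M : SL(2, R)) (s : R) :
    4 * M 1 0 * (twistedCompanion 1 s * M * (twistedCompanion 1 s)⁻¹) 1 0 =
      (M 1 1 - M 0 0 - s * (2 * M 1 0)) ^ 2 - (M.val.trace ^ 2 - 4) := by
  rw [conj_apply_one_zero, Matrix.trace_fin_two]
  simp only [coe_twistedCompanion, inv_one, Units.val_one, Matrix.of_apply, Matrix.cons_val',
    Matrix.cons_val_zero, Matrix.cons_val_one, Matrix.cons_val_fin_one]
  linear_combination 4 * det_entries M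

lemma mem_center_iff_eq_one_or_eq_neg_one [NoZeroDivisors R] {A : SL(2, R)} :
    A ∈ Subgroup.center SL(2, R) ↔ A = 1 ∨ A = -1 := by
  rw [Matrix.SpecialLinearGroup.mem_center_iff, Fintype.card_fin]
  constructor
  · rintro ⟨r, hr, h⟩
    refine (sq_eq_one_iff.1 hr).imp ?_ ?_ <;> rintro rfl <;> refine Subtype.ext (h.symm.trans ?_)
    · rw [map_one, Matrix.SpecialLinearGroup.coe_one]
    · rw [map_neg, map_one, Matrix.SpecialLinearGroup.coe_neg, Matrix.SpecialLinearGroup.coe_one]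
  · rintro (rfl | rfl)
    · exact ⟨1, one_pow 2, map_one _⟩
    · exact ⟨-1, neg_one_sq, by
        rw [map_neg, map_one, Matrix.SpecialLinearGroup.coe_neg, Matrix.SpecialLinearGroup.coe_one]⟩

lemma mk_center_eq_iff [NoZeroDivisors R] {A B : SL(2, R)} :
    (QuotientGroup.mk A : SL(2, R) ⧸ Subgroup.center SL(2, R)) = QuotientGroup.mk B ↔
      A = B ∨ A = -B := by
  rw [QuotientGroup.eq, mem_center_iff_eq_one_or_eq_neg_one, inv_mul_eq_one, inv_mul_eq_iff_eq_mul,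
    mul_neg_one, ← neg_eq_iff_eq_neg, eq_comm (a := -B)]

lemma isConj_mk_center_iff [NoZeroDivisors R] {A B : SL(2, R)} :
    IsConj (QuotientGroup.mk A : SL(2, R) ⧸ Subgroup.center SL(2, R)) (QuotientGroup.mk B) ↔
      IsConj A B ∨ IsConj A (-B) := by
  simp only [isConj_iff, ← exists_or, ← mk_center_eq_iff]
  exact (QuotientGroup.mk_surjective (s := Subgroup.center SL(2, R))).exists

end SpecialLinear

namespace Eisenstein

lemma omega_sq_add_omega_add_one : ω ^ 2 + ω + 1 = 0 := by
  have h := AdjoinRoot.eval₂_root (X ^ 2 + X + 1 : ℤ[X])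
  simpa only [eval₂_add, eval₂_pow, eval₂_X, eval₂_one] using! h

lemma omega_pow_three : ω ^ 3 = 1 := by
  linear_combination (ω - 1) * omega_sq_add_omega_add_one

lemma exists_eq_add_mul_omega (x : Eisenstein) : ∃ a b : ℤ, x = a + b * ω := by
  obtain ⟨p, rfl⟩ := AdjoinRoot.mk_surjective x
  induction p using Polynomial.induction_on with
  | C a => exact ⟨a, 0, by simp⟩
  | add p q hp hq =>
    obtain ⟨a, b, hp⟩ := hp
    obtain ⟨c, d, hq⟩ := hq
    exact ⟨a + c, b + d, by rw [map_add, hp, hq]; push_cast; ring⟩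
  | monomial n a h =>
    obtain ⟨c, d, h⟩ := h
    refine ⟨-d, c - d, ?_⟩
    rw [pow_succ X n, ← mul_assoc, map_mul, h, AdjoinRoot.mk_X, ← ω]
    push_cast
    linear_combination (d : Eisenstein) * omega_sq_add_omega_add_one

/-- The ring homomorphism out of `ℤ[ω]` sending `ω` to a given root `ζ` of `X² + X + 1`. It provides
both the complex embedding and the reductions modulo the two primes above `7`. -/
noncomputable def lift {R : Type*} [CommRing R] (ζ : R) (h : ζ ^ 2 + ζ + 1 = 0) :
    Eisenstein →+* R :=
  AdjoinRoot.lift (Int.castRingHom R) ζ (by simpa using h)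

@[simp]
lemma lift_omega {R : Type*} [CommRing R] (ζ : R) (h : ζ ^ 2 + ζ + 1 = 0) : lift ζ h ω = ζ := by
  simp [lift, ω]

/-- The embedding of `ℤ[ω]` into `ℂ` under which `ω` has positive imaginary part. -/
noncomputable def toComplex : Eisenstein →+* ℂ :=
  lift ⟨-1 / 2, √3 / 2⟩ <| by
    have h : √3 ^ 2 = (3 : ℝ) := Real.sq_sqrt (by norm_num)
    apply Complex.ext
    · simp only [pow_two, Complex.add_re, Complex.mul_re, Complex.one_re, Complex.zero_re]
      linear_combination (-1 / 4 : ℝ) * h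
    · simp only [pow_two, Complex.add_im, Complex.mul_im, Complex.one_im, Complex.zero_im]
      ring

lemma toComplex_add_mul_omega (a b : ℤ) :
    toComplex (a + b * ω) = ⟨a - b / 2, b * (√3 / 2)⟩ := by
  rw [toComplex, map_add, map_mul, map_intCast, map_intCast, lift_omega]
  apply Complex.ext
  · simp only [Complex.add_re, Complex.mul_re, Complex.intCast_re, Complex.intCast_im]
    ring
  · simp only [Complex.add_im, Complex.mul_im, Complex.intCast_re, Complex.intCast_im]
    ring

lemma norm_toComplex_sq (a b : ℤ) :
    ‖toComplex (a + b * ω)‖ ^ 2 = ((a ^ 2 - a * b + b ^ 2 : ℤ) : ℝ) := by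
  have h : √3 ^ 2 = (3 : ℝ) := Real.sq_sqrt (by norm_num)
  rw [toComplex_add_mul_omega, ← Complex.normSq_eq_norm_sq, Complex.normSq_mk]
  push_cast
  linear_combination (b ^ 2 / 4 : ℝ) * h

lemma exists_norm_toComplex_sq_eq_natCast (x : Eisenstein) : ∃ n : ℕ, ‖toComplex x‖ ^ 2 = n := by
  obtain ⟨a, b, rfl⟩ := exists_eq_add_mul_omega x
  have hnonneg : 0 ≤ a ^ 2 - a * b + b ^ 2 := by nlinarith [sq_nonneg (2 * a - b), sq_nonneg b]
  obtain ⟨n, hn⟩ := Int.eq_ofNat_of_zero_le hnonneg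
  exact ⟨n, by rw [norm_toComplex_sq, hn, Int.cast_natCast]⟩

lemma toComplex_injective : Function.Injective toComplex := by
  refine (injective_iff_map_eq_zero _).2 fun x hx ↦ ?_
  obtain ⟨a, b, rfl⟩ := exists_eq_add_mul_omega x
  have h : a ^ 2 - a * b + b ^ 2 = 0 := by
    have := norm_toComplex_sq a b
    rw [hx, norm_zero, zero_pow two_ne_zero] at this
    exact_mod_cast this.symm
  have hb : b = 0 := by nlinarith [sq_nonneg (2 * a - b)]
  have ha : a = 0 := by simpa [hb] using h
  simp [ha, hb]

instance : IsDomain Eisenstein := toComplex_injective.isDomain toComplex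

lemma exists_norm_sub_toComplex_sq_le (w : ℂ) : ∃ q, ‖w - toComplex q‖ ^ 2 ≤ 7 / 16 := by
  have h3 : √3 ^ 2 = (3 : ℝ) := Real.sq_sqrt (by norm_num)
  let b := round (w.im / (√3 / 2))
  let a := round (w.re + b / 2)
  refine ⟨a + b * ω, ?_⟩
  have hre : (w.re - (a - b / 2)) ^ 2 ≤ (1 / 2) ^ 2 := by
    have := abs_sub_round (w.re + b / 2)
    exact sq_le_sq' (by linarith [neg_le_of_abs_le this]) (by linarith [le_of_abs_le this])
  have him : (w.im - b * (√3 / 2)) ^ 2 ≤ 3 / 16 := by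
    have := sq_le_sq.2 ((abs_sub_round (w.im / (√3 / 2))).trans (le_abs_self _))
    calc (w.im - b * (√3 / 2)) ^ 2 = ((w.im / (√3 / 2) - b) * (√3 / 2)) ^ 2 := by
          rw [sub_mul, div_mul_cancel₀ _ (by positivity)]
      _ = (w.im / (√3 / 2) - b) ^ 2 * (3 / 4) := by rw [mul_pow, div_pow, h3]; norm_num
      _ ≤ (1 / 2) ^ 2 * (3 / 4) := by gcongr
      _ = 3 / 16 := by norm_num
  rw [toComplex_add_mul_omega, ← Complex.normSq_eq_norm_sq, Complex.normSq_apply]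
  simp only [Complex.sub_re, Complex.sub_im]
  linarith

lemma exists_norm_sub_mul_sq_le (x : Eisenstein) {y : Eisenstein} (hy : y ≠ 0) :
    ∃ q, ‖toComplex (x - q * y)‖ ^ 2 ≤ 7 / 16 * ‖toComplex y‖ ^ 2 := by
  have hy' : toComplex y ≠ 0 := (map_ne_zero_iff _ toComplex_injective).2 hy
  obtain ⟨q, hq⟩ := exists_norm_sub_toComplex_sq_le (toComplex x / toComplex y)
  refine ⟨q, ?_⟩
  rw [map_sub, map_mul, ← div_mul_cancel₀ (toComplex x) hy', ← sub_mul, norm_mul, mul_pow]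
  gcongr

lemma exists_mul_omega_pow_sq_eq {x : Eisenstein} (hx : x ≠ 0) (hnorm : ‖toComplex x‖ ^ 2 < 3) :
    ∃ k : ℕ, x * (ω ^ k) ^ 2 = 1 ∨ x * (ω ^ k) ^ 2 = -1 := by
  have hω (k : ℕ) : ω ^ k * (ω ^ k) ^ 2 = 1 := by
    rw [← pow_succ', ← pow_mul', pow_mul, omega_pow_three, one_pow]
  suffices ∃ k : ℕ, x = ω ^ k ∨ x = -ω ^ k by
    obtain ⟨k, rfl | rfl⟩ := this
    · exact ⟨k, .inl (hω k)⟩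
    · exact ⟨k, .inr (by rw [neg_mul, hω])⟩
  obtain ⟨a, b, rfl⟩ := exists_eq_add_mul_omega x
  have hlt : a ^ 2 - a * b + b ^ 2 < 3 := by
    rw [norm_toComplex_sq] at hnorm
    exact_mod_cast hnorm
  have ha : -1 ≤ a ∧ a ≤ 1 := by constructor <;> nlinarith [sq_nonneg (2 * b - a)]
  have hb : -1 ≤ b ∧ b ≤ 1 := by constructor <;> nlinarith [sq_nonneg (2 * a - b)]
  obtain ⟨ha₁, ha₂⟩ := ha
  obtain ⟨hb₁, hb₂⟩ := hb
  have hω2 : ω ^ 2 = -1 - ω := by linear_combination omega_sq_add_omega_add_one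
  have hcases : (a = 0 ∧ b = 0) ∨ (a = 1 ∧ b = 0) ∨ (a = -1 ∧ b = 0) ∨ (a = 0 ∧ b = 1) ∨
      (a = 0 ∧ b = -1) ∨ (a = -1 ∧ b = -1) ∨ (a = 1 ∧ b = 1) := by
    interval_cases a <;> interval_cases b <;> omega
  rcases hcases with ⟨rfl, rfl⟩ | ⟨rfl, rfl⟩ | ⟨rfl, rfl⟩ | ⟨rfl, rfl⟩ | ⟨rfl, rfl⟩ | ⟨rfl, rfl⟩ |
    ⟨rfl, rfl⟩
  · simp at hx
  · exact ⟨0, .inl (by simp)⟩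
  · exact ⟨0, .inr (by simp)⟩
  · exact ⟨1, .inl (by simp)⟩
  · exact ⟨1, .inr (by simp)⟩
  · exact ⟨2, .inl (by rw [hω2]; push_cast; ring)⟩
  · exact ⟨2, .inr (by rw [hω2]; push_cast; ring)⟩

lemma exists_norm_conj_lt {M : SL2E}
    (h : 4 * ‖toComplex (M.val.trace ^ 2 - 4)‖ < 9 * ‖toComplex (M 1 0)‖ ^ 2) :
    ∃ g : SL2E, ‖toComplex ((g * M * g⁻¹) 1 0)‖ < ‖toComplex (M 1 0)‖ := by
  have hM : M 1 0 ≠ 0 := by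
    intro h0
    rw [h0, map_zero, norm_zero] at h
    linarith [norm_nonneg (toComplex (M.val.trace ^ 2 - 4))]
  have htwo : (2 : Eisenstein) ≠ 0 := by
    rw [← map_ne_zero_iff _ toComplex_injective, map_ofNat]
    exact two_ne_zero
  obtain ⟨s, hs⟩ := exists_norm_sub_mul_sq_le (M 1 1 - M 0 0) (mul_ne_zero htwo hM)
  refine ⟨twistedCompanion 1 s, ?_⟩
  set c := M 1 0
  set c' := (twistedCompanion 1 s * M * (twistedCompanion 1 s)⁻¹) 1 0
  set z := M 1 1 - M 0 0 - s * (2 * c)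
  have hz : ‖toComplex z‖ ^ 2 ≤ 7 / 4 * ‖toComplex c‖ ^ 2 := by
    rw [map_mul, norm_mul, map_ofNat, Complex.norm_ofNat] at hs
    linarith
  have hmul : 4 * ‖toComplex c‖ * ‖toComplex c'‖ < 4 * ‖toComplex c‖ * ‖toComplex c‖ :=
    calc 4 * ‖toComplex c‖ * ‖toComplex c'‖
        = ‖toComplex (z ^ 2 - (M.val.trace ^ 2 - 4))‖ := by
          rw [← four_mul_conj_twistedCompanion, map_mul, map_mul, norm_mul, norm_mul, map_ofNat,
            Complex.norm_ofNat]
      _ ≤ ‖toComplex z‖ ^ 2 + ‖toComplex (M.val.trace ^ 2 - 4)‖ := by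
          rw [map_sub, map_pow, ← norm_pow]
          exact norm_sub_le _ _
      _ < 4 * ‖toComplex c‖ * ‖toComplex c‖ := by linarith
  exact lt_of_mul_lt_mul_left hmul (by positivity)

lemma exists_isConj_norm_le (M : SL2E) :
    ∃ N : SL2E, IsConj M N ∧
      9 * ‖toComplex (N 1 0)‖ ^ 2 ≤ 4 * ‖toComplex (M.val.trace ^ 2 - 4)‖ := by
  obtain ⟨n, hn⟩ := exists_norm_toComplex_sq_eq_natCast (M 1 0)
  induction n using Nat.strong_induction_on generalizing M with
  | h n ih =>
    rcases le_or_gt (9 * ‖toComplex (M 1 0)‖ ^ 2) (4 * ‖toComplex (M.val.trace ^ 2 - 4)‖) with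
      hle | hgt
    · exact ⟨M, IsConj.refl M, hle⟩
    obtain ⟨g, hg⟩ := exists_norm_conj_lt hgt
    have hconj : IsConj M (g * M * g⁻¹) := isConj_iff.2 ⟨g, rfl⟩
    obtain ⟨m, hm⟩ := exists_norm_toComplex_sq_eq_natCast ((g * M * g⁻¹) 1 0)
    have hmn : m < n := by
      have := pow_lt_pow_left₀ hg (norm_nonneg _) two_ne_zero
      rw [hm, hn] at this
      exact_mod_cast this
    obtain ⟨N, hN, hle⟩ := ih m hmn (g * M * g⁻¹) hm
    exact ⟨N, hconj.trans hN, by rwa [trace_eq_of_isConj hconj]⟩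

lemma sq_sub_omega_mul_add_one_ne_zero (p : Eisenstein) : p ^ 2 - ω * p + 1 ≠ 0 := by
  intro h
  have hirred : ∀ r : ZMod 7, r ^ 2 - 4 * r + 1 ≠ 0 := by decide
  let φ := lift (4 : ZMod 7) (by decide)
  have hφ : φ ω = 4 := lift_omega _ _
  apply hirred (φ p)
  simpa only [map_add, map_sub, map_mul, map_pow, map_one, map_zero, hφ] using congrArg φ h

lemma norm_omega_sq_sub_four_le : ‖toComplex (ω ^ 2 - 4)‖ ≤ 5 := by
  have hω : ‖toComplex ω‖ = 1 :=
    Complex.norm_eq_one_of_pow_eq_one (by rw [← map_pow, omega_pow_three, map_one]) three_ne_zero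
  calc ‖toComplex (ω ^ 2 - 4)‖ ≤ ‖toComplex ω‖ ^ 2 + 4 := by
        rw [map_sub, map_pow, map_ofNat, ← norm_pow]
        exact (norm_sub_le _ _).trans_eq (by rw [Complex.norm_ofNat])
    _ = 5 := by rw [hω]; norm_num

end Eisenstein

open Eisenstein

lemma gamma_eq_twistedCompanion : γ₀ = twistedCompanion (-1) ω := by
  ext i j
  fin_cases i <;> fin_cases j <;> simp [γ₀, twistedCompanion]

lemma gamma'_eq_twistedCompanion : γ₀' = twistedCompanion 1 ω := by
  ext i j
  fin_cases i <;> fin_cases j <;> simp [γ₀', twistedCompanion]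

lemma isConj_gamma_or_gamma'_of_trace_eq_omega {M : SL2E} (h : M.val.trace = ω) :
    IsConj γ₀ M ∨ IsConj γ₀' M := by
  obtain ⟨N, hMN, hN⟩ := exists_isConj_norm_le M
  have htr : N.val.trace = ω := by rw [← trace_eq_of_isConj hMN, h]
  have hN0 : N 1 0 ≠ 0 := fun h0 ↦
    sq_sub_omega_mul_add_one_ne_zero (N 0 0) (htr ▸ sq_sub_trace_mul_add_one_eq_zero h0)
  have hnorm : ‖toComplex (N 1 0)‖ ^ 2 < 3 := by
    rw [h] at hN
    linarith [norm_omega_sq_sub_four_le]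
  rw [gamma_eq_twistedCompanion, gamma'_eq_twistedCompanion, ← htr]
  obtain ⟨k, hk | hk⟩ := exists_mul_omega_pow_sq_eq hN0 hnorm
  · exact .inr (hMN.trans (isConj_twistedCompanion (by simpa using hk))).symm
  · exact .inl (hMN.trans (isConj_twistedCompanion (by simpa using hk))).symm

lemma not_isConj_gamma_gamma' : ¬ IsConj γ₀ γ₀' := by
  rw [gamma_eq_twistedCompanion, gamma'_eq_twistedCompanion]
  intro h
  obtain ⟨x, y, hxy⟩ := exists_form_eq_of_isConj_twistedCompanion h
  let φ := lift (2 : ZMod 7) (by decide)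
  have hφ : φ ω = 2 := lift_omega _ _
  have hmod : -(φ x + φ y) ^ 2 = 1 := by
    have h := congrArg φ hxy
    simp only [Units.val_one, Units.val_neg, inv_neg, inv_one, map_add, map_sub, map_mul, map_pow,
      map_neg, map_one, hφ] at h
    linear_combination -h
  have hsq : ∀ r : ZMod 7, -r ^ 2 ≠ 1 := by decide
  exact hsq _ hmod

lemma not_isConj_gamma_neg_gamma' : ¬ IsConj γ₀ (-γ₀') := by
  intro h
  have htr : ω = -ω := by
    simpa only [gamma_eq_twistedCompanion, gamma'_eq_twistedCompanion, trace_twistedCompanion,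
      Matrix.SpecialLinearGroup.coe_neg, Matrix.trace_neg] using trace_eq_of_isConj h
  have hmod := congrArg (lift (2 : ZMod 7) (by decide)) htr
  rw [map_neg, lift_omega] at hmod
  exact absurd hmod (by decide)

/-- In `PSL(2, ℤ[ω])`, the elements represented by `γ₀` and `γ₀'` lie in
two distinct conjugacy classes, and every element of `PSL(2, ℤ[ω])` represented by a
matrix in `SL(2, ℤ[ω])` of trace `ω` or `−ω` is conjugate to the class of `γ₀` or to
the class of `γ₀'`. -/
theorem stmt_18 :
    ¬ IsConj (QuotientGroup.mk γ₀ : PSL2E) (QuotientGroup.mk γ₀' : PSL2E) ∧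
    ∀ x : PSL2E,
      (∃ m : SL2E, (QuotientGroup.mk m : PSL2E) = x ∧
        (Matrix.trace (m : Matrix (Fin 2) (Fin 2) Eisenstein) = ω ∨
          Matrix.trace (m : Matrix (Fin 2) (Fin 2) Eisenstein) = -ω)) →
      (IsConj (QuotientGroup.mk γ₀ : PSL2E) x ∨
        IsConj (QuotientGroup.mk γ₀' : PSL2E) x) := by
  refine ⟨fun h ↦ ?_, ?_⟩
  · rcases isConj_mk_center_iff.1 h with h | h
    · exact not_isConj_gamma_gamma' h
    · exact not_isConj_gamma_neg_gamma' h
  · rintro _ ⟨m, rfl, hm | hm⟩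
    · exact (isConj_gamma_or_gamma'_of_trace_eq_omega hm).imp (isConj_mk_center_iff.2 <| .inl ·)
        (isConj_mk_center_iff.2 <| .inl ·)
    · have htr : (-m).val.trace = ω := by
        rw [Matrix.SpecialLinearGroup.coe_neg, Matrix.trace_neg, hm, neg_neg]
      exact (isConj_gamma_or_gamma'_of_trace_eq_omega htr).imp (isConj_mk_center_iff.2 <| .inr ·)
        (isConj_mk_center_iff.2 <| .inr ·)
end
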